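/- Suppose the Krein matrix K(z) for the pencil (R − zS) is Hermitian for real z and z₀ > 0 is a simple zero of a Krein eigenvalue r_j (r_j(z₀) = 0, r_j'(z₀) ≠ 0) corresponding to a simple pencil eigenvalue z₀ with eigenvector u = Σ c_i s_i + s⁺ where c = (c_1,…,c_k) is a unit vector with K(z₀)c = 0. Then sign⟨u, Ru⟩ = −sign r_j'(z₀) up to a positive factor; in particular the eigenvalue has negative Krein signature (⟨u, Ru⟩ < 0) if and only if r_j'(z₀) > 0. -/

import Mathlib

/-! The pencil eigenvalue equation gives `⟨u, R u⟩ = z₀ ⟨u, S u⟩`, so everything reduces to the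
slope formula `r'(z₀) = -⟨u, S u⟩`.

With `M(z) = R̃ - z`, the resolvent identity gives `K(z) - K(z₀) = (z - z₀) L(z)` where
`L(z) = -S_N - Bᵀ M(z)⁻¹ M(z₀)⁻¹ B` is continuous at `z₀` (`KreinMatrixR_sub`). Since `K(z₀)` is
symmetric and kills `c(z₀)`, pairing `K(z) c(z) = r(z) c(z)` with `c(z₀)` yields
`(z - z₀) ⟨c(z₀), L(z) c(z)⟩ = r(z) ⟨c(z₀), c(z)⟩`. The eigenvector branch `c` is not assumed
continuous; compactness of the unit sphere provides a limit `c*` of `c(z)` along an ultrafilter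
converging to `z₀`, and `K(z₀) c* = 0`. Reconstructing a pencil eigenvector from `c*`
(`pencil_of_krein_ker`) and using that `z₀` is a simple pencil eigenvalue shows that `c*` is a
nonzero multiple of `c(z₀)`, so that `r'(z₀) = ⟨c(z₀), L(z₀) c(z₀)⟩` (`slope_eq`).

Finally `s⁺ = -T M(z₀)⁻¹ B c(z₀)` (`splus_eq`) and `T S T = P` identify
`⟨c(z₀), L(z₀) c(z₀)⟩` with `-⟨u, S u⟩` (`quadratic_form_eq`). -/

open Matrix Filter

/-- The Gram matrix `(⟨s i, A (s j)⟩)` of a real matrix `A` on the family `s`. -/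
def gramR {n k : ℕ} (A : Matrix (Fin n) (Fin n) ℝ) (s : Fin k → Fin n → ℝ) :
    Matrix (Fin k) (Fin k) ℝ :=
  Matrix.of fun i j => s i ⬝ᵥ A.mulVec (s j)

/-- The matrix `B` whose `j`-th column is `S₊^{-1/2} P R s j = T (P (R (s j)))`. -/
def Bmat {n k : ℕ} (T P R : Matrix (Fin n) (Fin n) ℝ) (s : Fin k → Fin n → ℝ) :
    Matrix (Fin n) (Fin k) ℝ :=
  Matrix.of fun i j => (T.mulVec (P.mulVec (R.mulVec (s j)))) i

/-- The Krein matrix for real `z`: `K(z) = R_N - z S_N - Bᵀ (R̃ - z)⁻¹ B` with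
`R̃ = T R T`, `T = S₊^{-1/2}`. -/
noncomputable def KreinMatrixR {n k : ℕ} (R S P T : Matrix (Fin n) (Fin n) ℝ)
    (s : Fin k → Fin n → ℝ) (z : ℝ) : Matrix (Fin k) (Fin k) ℝ :=
  gramR R s - z • gramR S s -
    (Bmat T P R s)ᵀ * ((T * R * T) - z • 1)⁻¹ * Bmat T P R s

section KreinAux

variable {n k : ℕ}

/-- The vector `∑ dᵢ sᵢ` with coordinates `d` on the family `s`. -/
def synth (s : Fin k → Fin n → ℝ) (d : Fin k → ℝ) : Fin n → ℝ := ∑ i, d i • s i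

/-- The difference quotient of the Krein matrix at the points `z` and `z₀`,
in the closed form provided by the resolvent identity. -/
noncomputable def kreinQuot (R S P T : Matrix (Fin n) (Fin n) ℝ)
    (s : Fin k → Fin n → ℝ) (z₀ z : ℝ) : Matrix (Fin k) (Fin k) ℝ :=
  -gramR S s -
    (Bmat T P R s)ᵀ * (((T * R * T) - z • 1)⁻¹ * ((T * R * T) - z₀ • 1)⁻¹) * Bmat T P R s

lemma mulVec_synth (A : Matrix (Fin n) (Fin n) ℝ) (s : Fin k → Fin n → ℝ) (d : Fin k → ℝ) :
    A *ᵥ synth s d = ∑ i, d i • A *ᵥ s i := by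
  simp [synth, Matrix.mulVec_sum, Matrix.mulVec_smul]

lemma synth_dotProduct (s : Fin k → Fin n → ℝ) (d : Fin k → ℝ) (x : Fin n → ℝ) :
    synth s d ⬝ᵥ x = ∑ i, d i * (s i ⬝ᵥ x) := by
  simp [synth, sum_dotProduct]

lemma synth_smul (s : Fin k → Fin n → ℝ) (a : ℝ) (d : Fin k → ℝ) :
    synth s (a • d) = a • synth s d := by
  simp [synth, Finset.smul_sum, smul_smul]

lemma dotProduct_synth (s : Fin k → Fin n → ℝ)
    (hon : ∀ i j, s i ⬝ᵥ s j = if i = j then (1:ℝ) else 0) (d : Fin k → ℝ) (i : Fin k) :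
    s i ⬝ᵥ synth s d = d i := by
  simp [synth, dotProduct_sum, hon]

lemma gramR_mulVec (A : Matrix (Fin n) (Fin n) ℝ) (s : Fin k → Fin n → ℝ) (d : Fin k → ℝ)
    (i : Fin k) : (gramR A s *ᵥ d) i = s i ⬝ᵥ A *ᵥ synth s d := by
  rw [mulVec_synth, dotProduct_sum]
  simp only [dotProduct_smul, smul_eq_mul]
  simp only [mul_comm (d _)]
  rfl

lemma Bmat_mulVec (T P R : Matrix (Fin n) (Fin n) ℝ) (s : Fin k → Fin n → ℝ) (d : Fin k → ℝ) :
    Bmat T P R s *ᵥ d = T *ᵥ P *ᵥ R *ᵥ synth s d := by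
  simp only [mulVec_synth, Matrix.mulVec_sum, Matrix.mulVec_smul]
  ext i
  simp only [Finset.sum_apply, Pi.smul_apply, smul_eq_mul]
  simp only [mul_comm (d _)]
  rfl

lemma dotProduct_mulVec_symm {m : Type*} [Fintype m] {A : Matrix m m ℝ} (hA : Aᵀ = A)
    (x y : m → ℝ) : x ⬝ᵥ A *ᵥ y = A *ᵥ x ⬝ᵥ y := by
  rw [dotProduct_mulVec, ← mulVec_transpose, hA]

lemma Bmat_transpose_mulVec {T P R : Matrix (Fin n) (Fin n) ℝ} (hT : Tᵀ = T) (hP : Pᵀ = P)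
    (hR : Rᵀ = R) (s : Fin k → Fin n → ℝ) (x : Fin n → ℝ) (i : Fin k) :
    ((Bmat T P R s)ᵀ *ᵥ x) i = s i ⬝ᵥ R *ᵥ P *ᵥ T *ᵥ x := by
  rw [dotProduct_mulVec_symm hR, dotProduct_mulVec_symm hP, dotProduct_mulVec_symm hT]
  simp [Bmat, Matrix.mulVec, dotProduct]

lemma gramR_transpose {A : Matrix (Fin n) (Fin n) ℝ} (hA : Aᵀ = A) (s : Fin k → Fin n → ℝ) :
    (gramR A s)ᵀ = gramR A s := by
  ext i j
  simp only [gramR, transpose_apply, of_apply]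
  rw [dotProduct_mulVec_symm hA, dotProduct_comm]

lemma KreinMatrixR_transpose {R S T : Matrix (Fin n) (Fin n) ℝ} (P : Matrix (Fin n) (Fin n) ℝ)
    (hR : Rᵀ = R) (hS : Sᵀ = S) (hT : Tᵀ = T) (s : Fin k → Fin n → ℝ) (z : ℝ) :
    (KreinMatrixR R S P T s z)ᵀ = KreinMatrixR R S P T s z := by
  simp [KreinMatrixR, transpose_nonsing_inv, gramR_transpose, hR, hS, hT, Matrix.mul_assoc]

/-- The resolvent identity for the Krein matrix. -/
lemma KreinMatrixR_sub (R S P T : Matrix (Fin n) (Fin n) ℝ) (s : Fin k → Fin n → ℝ) {z₀ z : ℝ}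
    (h₀ : IsUnit ((T * R * T) - z₀ • (1 : Matrix (Fin n) (Fin n) ℝ)).det)
    (h : IsUnit ((T * R * T) - z • (1 : Matrix (Fin n) (Fin n) ℝ)).det) :
    KreinMatrixR R S P T s z - KreinMatrixR R S P T s z₀ =
      (z - z₀) • kreinQuot R S P T s z₀ z := by
  have key : ((T * R * T) - z • (1 : Matrix (Fin n) (Fin n) ℝ))⁻¹ - ((T * R * T) - z₀ • 1)⁻¹ =
      (z - z₀) • (((T * R * T) - z • 1)⁻¹ * ((T * R * T) - z₀ • 1)⁻¹) := by
    set M := (T * R * T) - z • (1 : Matrix (Fin n) (Fin n) ℝ) with hM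
    set M₀ := (T * R * T) - z₀ • (1 : Matrix (Fin n) (Fin n) ℝ) with hM₀
    have h1 : M₀ - M = (z - z₀) • 1 := by rw [hM, hM₀, sub_smul]; abel
    have h2 : M⁻¹ * (M₀ - M) * M₀⁻¹ = M⁻¹ - M₀⁻¹ := by
      rw [mul_sub, sub_mul, Matrix.nonsing_inv_mul _ h, Matrix.mul_assoc,
        Matrix.mul_nonsing_inv _ h₀, mul_one, one_mul]
    rw [← h2, h1]
    simp
  have h3 := congrArg (fun X => (Bmat T P R s)ᵀ * X * Bmat T P R s) key
  simp only [Matrix.mul_sub, Matrix.sub_mul, Matrix.mul_smul, Matrix.smul_mul] at h3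
  simp only [KreinMatrixR, kreinQuot, smul_sub, smul_neg, ← h3, sub_smul]
  abel

lemma continuousAt_resolvent (A : Matrix (Fin n) (Fin n) ℝ) {z₀ : ℝ}
    (h₀ : IsUnit (A - z₀ • (1 : Matrix (Fin n) (Fin n) ℝ)).det) :
    ContinuousAt (fun z : ℝ => (A - z • (1 : Matrix (Fin n) (Fin n) ℝ))⁻¹) z₀ := by
  have hc : Continuous fun z : ℝ => A - z • (1 : Matrix (Fin n) (Fin n) ℝ) := by fun_prop
  simp only [Matrix.inv_def, Ring.inverse_eq_inv']
  exact (hc.matrix_det.continuousAt.inv₀ h₀.ne_zero).smul hc.matrix_adjugate.continuousAt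

lemma eventually_isUnit_det (A : Matrix (Fin n) (Fin n) ℝ) {z₀ : ℝ}
    (h₀ : IsUnit (A - z₀ • (1 : Matrix (Fin n) (Fin n) ℝ)).det) :
    ∀ᶠ z in nhds z₀, IsUnit (A - z • (1 : Matrix (Fin n) (Fin n) ℝ)).det := by
  have hc : Continuous fun z : ℝ => A - z • (1 : Matrix (Fin n) (Fin n) ℝ) := by fun_prop
  filter_upwards [hc.matrix_det.continuousAt.eventually_ne h₀.ne_zero] with z hz
  exact isUnit_iff_ne_zero.2 hz

lemma continuousAt_kreinQuot (R S P T : Matrix (Fin n) (Fin n) ℝ) (s : Fin k → Fin n → ℝ) {z₀ : ℝ}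
    (h₀ : IsUnit ((T * R * T) - z₀ • (1 : Matrix (Fin n) (Fin n) ℝ)).det) :
    ContinuousAt (kreinQuot R S P T s z₀) z₀ := by
  have h := continuousAt_resolvent (T * R * T) h₀
  have hc : Continuous fun X : Matrix (Fin n) (Fin n) ℝ => -gramR S s -
      (Bmat T P R s)ᵀ * (X * ((T * R * T) - z₀ • 1)⁻¹) * Bmat T P R s := by fun_prop
  exact hc.continuousAt.comp h

lemma isCompact_unit (k : ℕ) : IsCompact {x : Fin k → ℝ | x ⬝ᵥ x = 1} := by
  have hcl : IsClosed {x : Fin k → ℝ | x ⬝ᵥ x = 1} :=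
    isClosed_eq (by fun_prop) continuous_const
  refine (isCompact_closedBall (0 : Fin k → ℝ) 1).of_isClosed_subset hcl fun x hx => ?_
  rw [mem_closedBall_zero_iff, pi_norm_le_iff_of_nonneg zero_le_one]
  intro i
  have h1 : x i * x i ≤ x ⬝ᵥ x :=
    Finset.single_le_sum (f := fun i => x i * x i) (fun j _ => mul_self_nonneg _)
      (Finset.mem_univ i)
  rw [show x ⬝ᵥ x = 1 from hx] at h1
  rw [Real.norm_eq_abs]
  exact abs_le_one_iff_mul_self_le_one.2 h1

/-- The Hellmann–Feynman slope formula for an eigenvalue branch `r` of a family `K` of symmetric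
matrices with `r z₀ = 0`, where `L` is the difference quotient of `K` at `z₀`. The eigenvectors
`c z` need not depend continuously on `z`, as the kernel of `K z₀` is one-dimensional. -/
lemma slope_eq (K L : ℝ → Matrix (Fin k) (Fin k) ℝ) (r : ℝ → ℝ) (c : ℝ → Fin k → ℝ) (z₀ r' : ℝ)
    (hsymm : (K z₀)ᵀ = K z₀) (hL : ContinuousAt L z₀)
    (hKL : ∀ᶠ z in nhds z₀, K z - K z₀ = (z - z₀) • L z)
    (hbr : ∀ᶠ z in nhds z₀, K z *ᵥ c z = r z • c z ∧ c z ⬝ᵥ c z = 1)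
    (hr0 : r z₀ = 0) (hderiv : HasDerivAt r r' z₀)
    (hker : ∀ d, K z₀ *ᵥ d = 0 → ∃ a : ℝ, d = a • c z₀) :
    r' = c z₀ ⬝ᵥ L z₀ *ᵥ c z₀ := by
  let U : Ultrafilter ℝ := Ultrafilter.of (nhdsWithin z₀ {z₀}ᶜ)
  have hU' : (U : Filter ℝ) ≤ nhdsWithin z₀ {z₀}ᶜ := Ultrafilter.of_le _
  have hU : (U : Filter ℝ) ≤ nhds z₀ := hU'.trans nhdsWithin_le_nhds
  have hK0 : K z₀ *ᵥ c z₀ = 0 := by rw [hbr.self_of_nhds.1, hr0, zero_smul]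
  obtain ⟨d, hd1, hd⟩ := (isCompact_unit k).ultrafilter_le_nhds (U.map c) (by
    rw [le_principal_iff]
    exact (hbr.filter_mono hU).mono fun z hz => hz.2)
  replace hd : Tendsto c U (nhds d) := hd
  have hLU : Tendsto L U (nhds (L z₀)) := hL.mono_left hU
  have hz : Tendsto (fun z : ℝ => z - z₀) U (nhds 0) := by
    have : Tendsto (fun z : ℝ => z - z₀) (nhds z₀) (nhds (z₀ - z₀)) :=
      tendsto_id.sub tendsto_const_nhds
    rw [sub_self] at this
    exact this.mono_left hU
  have hr : Tendsto r U (nhds 0) := by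
    have := hderiv.continuousAt.tendsto.mono_left hU
    rwa [hr0] at this
  have hLc : Tendsto (fun z => L z *ᵥ c z) U (nhds (L z₀ *ᵥ d)) :=
    ((by fun_prop : Continuous fun p : Matrix (Fin k) (Fin k) ℝ × (Fin k → ℝ) =>
      p.1 *ᵥ p.2).tendsto (L z₀, d)).comp (hLU.prodMk_nhds hd)
  have heq : ∀ᶠ z in (U : Filter ℝ), K z₀ *ᵥ c z = r z • c z - (z - z₀) • L z *ᵥ c z := by
    filter_upwards [hKL.filter_mono hU, hbr.filter_mono hU] with z h1 h2
    rw [← Matrix.smul_mulVec, ← h1, Matrix.sub_mulVec, h2.1]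
    abel
  have hd0 : K z₀ *ᵥ d = 0 := by
    have h1 : Tendsto (fun z => K z₀ *ᵥ c z) U (nhds (K z₀ *ᵥ d)) :=
      ((by fun_prop : Continuous fun p : Fin k → ℝ => K z₀ *ᵥ p).tendsto d).comp hd
    have h2 : Tendsto (fun z => r z • c z - (z - z₀) • L z *ᵥ c z) U
        (nhds ((0 : ℝ) • d - (0 : ℝ) • L z₀ *ᵥ d)) := (hr.smul hd).sub (hz.smul hLc)
    have := tendsto_nhds_unique (h1.congr' heq) h2
    simpa using this
  have hslope : Tendsto (slope r z₀) U (nhds r') :=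
    (hasDerivAt_iff_tendsto_slope.1 hderiv).mono_left hU'
  have hdot (x y : Fin k → ℝ) : Tendsto (fun y => x ⬝ᵥ y) (nhds y) (nhds (x ⬝ᵥ y)) :=
    (by fun_prop : Continuous fun y => x ⬝ᵥ y).tendsto y
  have hlim : r' * (c z₀ ⬝ᵥ d) = c z₀ ⬝ᵥ L z₀ *ᵥ d := by
    refine tendsto_nhds_unique (hslope.mul ((hdot (c z₀) d).comp hd))
      (((hdot (c z₀) _).comp hLc).congr' ?_)
    filter_upwards [heq, hU' self_mem_nhdsWithin] with z h1 h2
    have h3 : z - z₀ ≠ 0 := sub_ne_zero.2 h2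
    -- Pairing with `c z₀`, which the symmetric matrix `K z₀` annihilates.
    have h4 : c z₀ ⬝ᵥ K z₀ *ᵥ c z = 0 := by
      rw [dotProduct_mulVec_symm hsymm, hK0, zero_dotProduct]
    rw [h1, dotProduct_sub, dotProduct_smul, dotProduct_smul, smul_eq_mul, smul_eq_mul] at h4
    simp only [Function.comp, slope_def_field, hr0, sub_zero]
    field_simp
    linarith
  obtain ⟨a, rfl⟩ := hker d hd0
  have ha : a ≠ 0 := by
    rintro rfl
    simp at hd1
  rw [Matrix.mulVec_smul, dotProduct_smul, dotProduct_smul, hbr.self_of_nhds.2, smul_eq_mul,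
    smul_eq_mul, mul_one, mul_comm] at hlim
  exact mul_left_cancel₀ ha hlim

/-- `S` preserves the orthogonal complement of its eigenvectors `s i`, so it commutes with `P`. -/
lemma proj_comm {S P : Matrix (Fin n) (Fin n) ℝ} {s : Fin k → Fin n → ℝ} {μ : Fin k → ℝ}
    (hS : Sᵀ = S) (heig : ∀ i, S *ᵥ s i = μ i • s i) (hPsym : Pᵀ = P) (hPidem : P * P = P)
    (hPfix : ∀ x : Fin n → ℝ, P *ᵥ x = x ↔ ∀ i, s i ⬝ᵥ x = 0) : P * S = S * P := by
  have h1 : P * S * P = S * P := by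
    refine Matrix.mulVec_injective (funext fun x => ?_)
    have h2 : ∀ i, s i ⬝ᵥ P *ᵥ x = 0 := (hPfix _).1 (by rw [mulVec_mulVec, hPidem])
    have h3 : P *ᵥ S *ᵥ P *ᵥ x = S *ᵥ P *ᵥ x := (hPfix _).2 fun i => by
      rw [dotProduct_mulVec_symm hS, heig, smul_dotProduct, h2, smul_zero]
    simpa [mulVec_mulVec, Matrix.mul_assoc] using h3
  have h4 := congrArg Matrix.transpose h1
  simp only [transpose_mul, hS, hPsym] at h4
  rw [← h4, ← Matrix.mul_assoc, h1]

/-- A vector `d` in the kernel of `K(z₀)` reconstructs to a pencil eigenvector. -/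
lemma pencil_of_krein_ker {R S P T : Matrix (Fin n) (Fin n) ℝ} {s : Fin k → Fin n → ℝ} {z₀ : ℝ}
    (hR : Rᵀ = R) (hT : Tᵀ = T) (hPsym : Pᵀ = P) (hPidem : P * P = P) (hPS : P * S = S * P)
    (hPfix : ∀ x : Fin n → ℝ, P *ᵥ x = x ↔ ∀ i, s i ⬝ᵥ x = 0)
    (hPs : ∀ d, P *ᵥ synth s d = 0)
    (hPT : P * T = T) (hTP : T * P = T) (hTS : T * S * T = P)
    (hTpos : ∀ x : Fin n → ℝ, P *ᵥ x = x → x ≠ 0 → 0 < x ⬝ᵥ T *ᵥ x)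
    (hz₀ : z₀ ≠ 0) (hreg : IsUnit ((T * R * T) - z₀ • (1 : Matrix (Fin n) (Fin n) ℝ)).det)
    {d : Fin k → ℝ} (hd : KreinMatrixR R S P T s z₀ *ᵥ d = 0) :
    (R - z₀ • S) *ᵥ (synth s d - T *ᵥ ((T * R * T) - z₀ • 1)⁻¹ *ᵥ Bmat T P R s *ᵥ d) = 0 := by
  set x := ((T * R * T) - z₀ • (1 : Matrix (Fin n) (Fin n) ℝ))⁻¹ *ᵥ Bmat T P R s *ᵥ d with hx
  have hPT' (y : Fin n → ℝ) : P *ᵥ T *ᵥ y = T *ᵥ y := by rw [mulVec_mulVec, hPT]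
  have hTP' (y : Fin n → ℝ) : T *ᵥ P *ᵥ y = T *ᵥ y := by rw [mulVec_mulVec, hTP]
  have hPS' (y : Fin n → ℝ) : P *ᵥ S *ᵥ y = S *ᵥ P *ᵥ y := by
    rw [mulVec_mulVec, hPS, mulVec_mulVec]
  have hPP' (y : Fin n → ℝ) : P *ᵥ P *ᵥ y = P *ᵥ y := by rw [mulVec_mulVec, hPidem]
  have hTS' (y : Fin n → ℝ) : T *ᵥ S *ᵥ T *ᵥ y = P *ᵥ y := by
    rw [mulVec_mulVec, mulVec_mulVec, hTS]
  have hMx : T *ᵥ R *ᵥ T *ᵥ x - z₀ • x = T *ᵥ R *ᵥ synth s d := by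
    have : ((T * R * T) - z₀ • (1 : Matrix (Fin n) (Fin n) ℝ)) *ᵥ x = Bmat T P R s *ᵥ d := by
      rw [hx, mulVec_mulVec, Matrix.mul_nonsing_inv _ hreg, one_mulVec]
    rw [Bmat_mulVec, hTP', sub_mulVec, smul_mulVec, one_mulVec, ← mulVec_mulVec,
      ← mulVec_mulVec] at this
    exact this
  -- `R̃` and `B` have range in that of `P`, and `z₀ ≠ 0`.
  have hPx : P *ᵥ x = x := by
    have h := congrArg (P *ᵥ ·) hMx
    simp only [mulVec_sub, mulVec_smul, hPT'] at h
    rw [← hMx] at h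
    exact smul_right_injective _ hz₀ (sub_right_injective h)
  set w := (R - z₀ • S) *ᵥ (synth s d - T *ᵥ x) with hw
  have hw' : w = R *ᵥ synth s d - R *ᵥ T *ᵥ x - (z₀ • S *ᵥ synth s d - z₀ • S *ᵥ T *ᵥ x) := by
    rw [hw, sub_mulVec, mulVec_sub, smul_mulVec, mulVec_sub, smul_sub]
  have hws : ∀ i, s i ⬝ᵥ w = 0 := fun i => by
    have h1 := congrFun hd i
    have h2 : s i ⬝ᵥ S *ᵥ T *ᵥ x = 0 :=
      (hPfix _).1 (by rw [hPS', hPT']) i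
    simp only [KreinMatrixR, sub_mulVec, smul_mulVec, Pi.sub_apply, Pi.smul_apply, gramR_mulVec,
      Matrix.mul_assoc, smul_eq_mul, Pi.zero_apply] at h1
    rw [← Matrix.mul_assoc T R T, ← mulVec_mulVec, ← mulVec_mulVec,
      Bmat_transpose_mulVec hT hPsym hR, ← hx, hPT'] at h1
    rw [hw']
    simp only [dotProduct_sub, dotProduct_smul, h2, smul_eq_mul]
    linarith
  have hPw : P *ᵥ w = w := (hPfix _).2 hws
  have hTw : T *ᵥ w = 0 := by
    have h1 : T *ᵥ S *ᵥ synth s d = 0 := by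
      rw [← hTP', hPS', hPs, mulVec_zero, mulVec_zero]
    rw [hw']
    simp only [mulVec_sub, mulVec_smul, h1, hTS', hPx, ← hMx]
    simp
  by_contra hne
  have := hTpos w hPw hne
  simp [hTw] at this

/-- The complementary component `s⁺` of the eigenvector is `-T (R̃ - z₀)⁻¹ B c`, stated by
solving for `(R̃ - z₀)⁻¹ B c = -S T s⁺`, since `S T` inverts `T` on the range of `P`. -/
lemma splus_eq {R S P T : Matrix (Fin n) (Fin n) ℝ} {s : Fin k → Fin n → ℝ} {z₀ : ℝ}
    (hPS : P * S = S * P) (hPT : P * T = T) (hTP : T * P = T) (hTS : T * S * T = P)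
    (hreg : IsUnit ((T * R * T) - z₀ • (1 : Matrix (Fin n) (Fin n) ℝ)).det)
    {d : Fin k → ℝ} {y : Fin n → ℝ} (hy : P *ᵥ y = y)
    (h : (P * R * P - z₀ • (P * S * P)) *ᵥ y = -((P * R) *ᵥ synth s d)) :
    P *ᵥ S *ᵥ T *ᵥ y = S *ᵥ T *ᵥ y ∧ T *ᵥ S *ᵥ T *ᵥ y = y ∧
      ((T * R * T) - z₀ • 1)⁻¹ *ᵥ Bmat T P R s *ᵥ d = -(S *ᵥ T *ᵥ y) := by
  have hPT' (y : Fin n → ℝ) : P *ᵥ T *ᵥ y = T *ᵥ y := by rw [mulVec_mulVec, hPT]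
  have hTP' (y : Fin n → ℝ) : T *ᵥ P *ᵥ y = T *ᵥ y := by rw [mulVec_mulVec, hTP]
  have h1 : P *ᵥ S *ᵥ T *ᵥ y = S *ᵥ T *ᵥ y := by
    rw [mulVec_mulVec, hPS, ← mulVec_mulVec, hPT']
  have h2 : T *ᵥ S *ᵥ T *ᵥ y = y := by
    rw [mulVec_mulVec, mulVec_mulVec, hTS, hy]
  have h3 (x : Fin n → ℝ) : T *ᵥ S *ᵥ T *ᵥ x = P *ᵥ x := by
    rw [mulVec_mulVec, mulVec_mulVec, hTS]
  refine ⟨h1, h2, ?_⟩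
  set v := S *ᵥ T *ᵥ y with hv
  have h4 := congrArg (T *ᵥ ·) h
  simp only [sub_mulVec, smul_mulVec, ← mulVec_mulVec, hy, mulVec_sub, mulVec_smul, hTP',
    mulVec_neg] at h4
  have h5 : T *ᵥ S *ᵥ y = v := by
    conv_lhs => rw [← h2]
    rw [h3, h1]
  have h6 : ((T * R * T) - z₀ • (1 : Matrix (Fin n) (Fin n) ℝ)) *ᵥ v = -(Bmat T P R s *ᵥ d) := by
    rw [Bmat_mulVec, hTP', sub_mulVec, smul_mulVec, one_mulVec, ← mulVec_mulVec,
      ← mulVec_mulVec, h2, ← h4, h5]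
  rw [← neg_eq_iff_eq_neg, ← mulVec_neg, ← h6, mulVec_mulVec,
    Matrix.nonsing_inv_mul _ hreg, one_mulVec]

/-- The quadratic form of `K'(z₀) = kreinQuot R S P T s z₀ z₀` at `d` is `-⟨u, S u⟩` for the
reconstructed vector `u = ∑ dᵢ sᵢ + y`. -/
lemma quadratic_form_eq {R S P T : Matrix (Fin n) (Fin n) ℝ} {s : Fin k → Fin n → ℝ} {z₀ : ℝ}
    (hR : Rᵀ = R) (hS : Sᵀ = S) (hT : Tᵀ = T) (hPsym : Pᵀ = P)
    (hPS : P * S = S * P) (hPs : ∀ d, P *ᵥ synth s d = 0)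
    (hPT : P * T = T) (hTP : T * P = T) (hTS : T * S * T = P)
    (hreg : IsUnit ((T * R * T) - z₀ • (1 : Matrix (Fin n) (Fin n) ℝ)).det)
    {d : Fin k → ℝ} {y : Fin n → ℝ} (hy : P *ᵥ y = y)
    (h : (P * R * P - z₀ • (P * S * P)) *ᵥ y = -((P * R) *ᵥ synth s d)) :
    d ⬝ᵥ kreinQuot R S P T s z₀ z₀ *ᵥ d = -((synth s d + y) ⬝ᵥ S *ᵥ (synth s d + y)) := by
  obtain ⟨h1, h2, h3⟩ := splus_eq hPS hPT hTP hTS hreg hy h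
  set v := S *ᵥ T *ᵥ y
  set M := (T * R * T) - z₀ • (1 : Matrix (Fin n) (Fin n) ℝ) with hM
  have hMt : (M⁻¹)ᵀ = M⁻¹ := by
    rw [transpose_nonsing_inv, hM]
    simp [hR, hT, Matrix.mul_assoc]
  have hgram : d ⬝ᵥ gramR S s *ᵥ d = synth s d ⬝ᵥ S *ᵥ synth s d := by
    rw [synth_dotProduct]
    simp only [dotProduct, gramR_mulVec]
  have hB : d ⬝ᵥ ((Bmat T P R s)ᵀ * (M⁻¹ * M⁻¹) * Bmat T P R s) *ᵥ d = v ⬝ᵥ v := by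
    rw [← mulVec_mulVec, ← mulVec_mulVec, ← mulVec_mulVec, h3, dotProduct_mulVec,
      vecMul_transpose, dotProduct_mulVec_symm hMt, h3, neg_dotProduct_neg]
  have hyy : y ⬝ᵥ S *ᵥ y = v ⬝ᵥ v := by
    have (x : Fin n → ℝ) : T *ᵥ S *ᵥ T *ᵥ x = P *ᵥ x := by
      rw [mulVec_mulVec, mulVec_mulVec, hTS]
    conv_lhs => rw [← h2]
    rw [← dotProduct_mulVec_symm hT, this, h1]
  have hcross : synth s d ⬝ᵥ S *ᵥ y = 0 := by
    rw [← hy, mulVec_mulVec, ← hPS, ← mulVec_mulVec, dotProduct_mulVec_symm hPsym, hPs,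
      zero_dotProduct]
  have hcross' : y ⬝ᵥ S *ᵥ synth s d = 0 := by
    rw [dotProduct_mulVec_symm hS, dotProduct_comm, hcross]
  rw [kreinQuot, sub_mulVec, neg_mulVec, dotProduct_sub, dotProduct_neg, hgram, hB, mulVec_add,
    add_dotProduct, dotProduct_add, dotProduct_add, hcross, hcross', hyy]
  ring

end KreinAux

/-- under the standard Krein-matrix construction, if `z₀ > 0` is a simple
eigenvalue of the pencil `R - z S` realized as a simple zero of a real-analytic Krein
eigenvalue branch `r` (with unit eigenvector branch `c`), and the pencil eigenvector is
reconstructed as `u = Σ cᵢ sᵢ + s⁺` with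
`(P R P - z₀ P S P) s⁺ = - P R (Σ cᵢ sᵢ)`, then `z₀` has negative Krein signature
(`⟨u, R u⟩ < 0`) if and only if `r'(z₀) > 0`. -/
theorem kreinEigenvalue_slope_signature (n k : ℕ) (S R : Matrix (Fin n) (Fin n) ℝ)
    (hS : Sᵀ = S) (hSh : S.IsHermitian) (hR : Rᵀ = R) (hSinv : IsUnit S.det)
    (hkneg : Nat.card {i // hSh.eigenvalues i < 0} = k)
    (s : Fin k → Fin n → ℝ) (μ : Fin k → ℝ)
    (hon : ∀ i j, s i ⬝ᵥ s j = if i = j then (1:ℝ) else 0)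
    (heig : ∀ i, S.mulVec (s i) = μ i • s i) (hμ : ∀ i, μ i < 0)
    (P : Matrix (Fin n) (Fin n) ℝ) (hPsym : Pᵀ = P) (hPidem : P * P = P)
    (hPfix : ∀ x : Fin n → ℝ, P.mulVec x = x ↔ ∀ i, s i ⬝ᵥ x = 0)
    (T : Matrix (Fin n) (Fin n) ℝ) (hT : Tᵀ = T) (hTP : P * T * P = T)
    (hTsq : T * (P * S * P) * T = P)
    (hTpos : ∀ x : Fin n → ℝ, P.mulVec x = x → x ≠ 0 → 0 < x ⬝ᵥ T.mulVec x)
    (z₀ : ℝ) (hz₀ : 0 < z₀) (hreg : IsUnit ((T * R * T) - z₀ • (1 : Matrix (Fin n) (Fin n) ℝ)).det)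
    (hsimple : Module.finrank ℝ (LinearMap.ker (Matrix.toLin' (R - z₀ • S))) = 1)
    (r : ℝ → ℝ) (c : ℝ → Fin k → ℝ) (ε : ℝ) (hε : 0 < ε)
    (hbranch : ∀ z ∈ Set.Ioo (z₀ - ε) (z₀ + ε),
      (KreinMatrixR R S P T s z).mulVec (c z) = r z • c z ∧ c z ⬝ᵥ c z = 1)
    (hr0 : r z₀ = 0) (r' : ℝ) (hderiv : HasDerivAt r r' z₀) (hr' : r' ≠ 0)
    (splus : Fin n → ℝ) (hsplusP : P.mulVec splus = splus)
    (hsplus : (P * R * P - z₀ • (P * S * P)).mulVec splus =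
      -((P * R).mulVec (∑ i, c z₀ i • s i)))
    (u : Fin n → ℝ) (hudef : u = (∑ i, c z₀ i • s i) + splus)
    (hu : (R - z₀ • S).mulVec u = 0) (hu0 : u ≠ 0) :
    u ⬝ᵥ R.mulVec u < 0 ↔ 0 < r' := by
  have hPT : P * T = T := by rw [← hTP, ← Matrix.mul_assoc, ← Matrix.mul_assoc, hPidem]
  have hTP' : T * P = T := by rw [← hTP, Matrix.mul_assoc, hPidem]
  have hTS : T * S * T = P := by
    calc T * S * T = (T * P) * S * (P * T) := by rw [hTP', hPT]
      _ = T * (P * S * P) * T := by simp only [Matrix.mul_assoc]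
      _ = P := hTsq
  have hPS := proj_comm hS heig hPsym hPidem hPfix
  have hPs (d : Fin k → ℝ) : P *ᵥ synth s d = 0 := by
    have h1 (x : Fin n → ℝ) : synth s d ⬝ᵥ P *ᵥ x = 0 := by
      have h2 := (hPfix (P *ᵥ x)).1 (by rw [mulVec_mulVec, hPidem])
      simp [synth_dotProduct, h2]
    refine dotProduct_eq_zero _ fun x => ?_
    rw [← dotProduct_mulVec_symm hPsym, h1]
  have hnhds : ∀ᶠ z in nhds z₀, z ∈ Set.Ioo (z₀ - ε) (z₀ + ε) :=
    Ioo_mem_nhds (by linarith) (by linarith)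
  have hslope : r' = c z₀ ⬝ᵥ kreinQuot R S P T s z₀ z₀ *ᵥ c z₀ := by
    refine slope_eq (KreinMatrixR R S P T s) (kreinQuot R S P T s z₀) r c z₀ r'
      (KreinMatrixR_transpose P hR hS hT s z₀) (continuousAt_kreinQuot R S P T s hreg)
      ?_ (hnhds.mono hbranch) hr0 hderiv ?_
    · filter_upwards [eventually_isUnit_det (T * R * T) hreg] with z hz
      exact KreinMatrixR_sub R S P T s hreg hz
    · intro d hd
      have h1 := pencil_of_krein_ker hR hT hPsym hPidem hPS hPfix hPs hPT hTP' hTS hTpos hz₀.ne'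
        hreg hd
      set x := ((T * R * T) - z₀ • (1 : Matrix (Fin n) (Fin n) ℝ))⁻¹ *ᵥ Bmat T P R s *ᵥ d
      have hmem : ∀ y, (R - z₀ • S) *ᵥ y = 0 →
          y ∈ LinearMap.ker (Matrix.toLin' (R - z₀ • S)) := fun y hy => by
        rw [LinearMap.mem_ker, Matrix.toLin'_apply, hy]
      obtain ⟨a, ha⟩ := (finrank_eq_one_iff_of_nonzero' (⟨u, hmem u hu⟩ :
        LinearMap.ker (Matrix.toLin' (R - z₀ • S))) (by simpa [Subtype.ext_iff] using hu0)).1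
        hsimple ⟨_, hmem _ h1⟩
      have ha' : a • u = synth s d - T *ᵥ x := congrArg Subtype.val ha
      -- Pairing with `s i` reads off the coordinates along the family `s`.
      refine ⟨a, funext fun i => ?_⟩
      have hTx : s i ⬝ᵥ T *ᵥ x = 0 := (hPfix _).1 (by rw [mulVec_mulVec, hPT]) i
      have hsp : s i ⬝ᵥ splus = 0 := (hPfix _).1 hsplusP i
      have h2 := congrArg (s i ⬝ᵥ ·) ha'
      simp only [hudef, dotProduct_smul, dotProduct_add, dotProduct_sub, hTx, hsp] at h2
      rw [← synth, dotProduct_synth s hon, dotProduct_synth s hon] at h2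
      simpa using h2.symm
  have hquad := quadratic_form_eq hR hS hT hPsym hPS hPs hPT hTP' hTS hreg hsplusP hsplus
  rw [synth, ← hudef, ← hslope] at hquad
  have hRu : u ⬝ᵥ R *ᵥ u = z₀ * (u ⬝ᵥ S *ᵥ u) := by
    rw [sub_mulVec, smul_mulVec, sub_eq_zero] at hu
    rw [hu, dotProduct_smul, smul_eq_mul]
  rw [hRu, ← neg_eq_iff_eq_neg.2 hquad, mul_neg, neg_lt_zero, mul_pos_iff_of_pos_left hz₀]
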